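/- Under assumptions (I1)–(I4), let M_n := { ‖u‖_H²/2 : u ∈ Q_λ for some λ ∈ (λ_n, λ_{n+1}) }. Then either M_n = (0, +∞), or there exists a real number g_n > 0 such that (0, g_n) ⊆ M_n ⊆ (0, g_n]. -/

import Mathlib

open Filter Topology Set
open scoped InnerProductSpace

/- Abstract setting: `E = D(A^{1/2})` is a real Hilbert space in which the rescaled
eigenfunctions `ζ_k / √(1+λ_k)` form a Hilbert basis (encoded by `hON` and `hdense` below);
the `H`-inner product of `u, v ∈ E` is recovered as `∑ₖ ⟨u,ζ_k⟩_H ⟨v,ζ_k⟩_H`, where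
`⟨u,ζ_k⟩_H = ⟨u,ζ_k⟩_E / (1+λ_k)`. -/

variable {E : Type*} [NormedAddCommGroup E] [InnerProductSpace ℝ E] [CompleteSpace E]

/-- The `H`-inner-product coefficient `⟨u, ζ_k⟩_H = ⟨u, ζ_k⟩_E / (1 + λ_k)`. -/
noncomputable def coefH (lam : ℕ → ℝ) (ζ : ℕ → E) (u : E) (k : ℕ) : ℝ :=
  ⟪u, ζ k⟫_ℝ / (1 + lam k)

/-- The square of the `H`-norm: `‖u‖_H² = ∑ₖ ⟨u,ζ_k⟩_H²`. -/
noncomputable def normHsq (lam : ℕ → ℝ) (ζ : ℕ → E) (u : E) : ℝ :=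
  ∑' k, (coefH lam ζ u k) ^ 2

/-- The symmetric bilinear form `q_λ(u,v) = ∑ₖ (λ_k − λ) ⟨u,ζ_k⟩_H ⟨v,ζ_k⟩_H`. -/
noncomputable def qForm (lam : ℕ → ℝ) (ζ : ℕ → E) (lambda : ℝ) (u v : E) : ℝ :=
  ∑' k, (lam k - lambda) * (coefH lam ζ u k * coefH lam ζ v k)

/-- The action functional `J_λ(u) = ½ q_λ(u) − I(u)`. -/
noncomputable def Jfun (lam : ℕ → ℝ) (ζ : ℕ → E) (I : E → ℝ) (lambda : ℝ) (u : E) : ℝ :=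
  qForm lam ζ lambda u u / 2 - I u

/-- `E_n`, the span of the eigenfunctions `ζ_0, …, ζ_n` (the first `n+1` of them). -/
noncomputable def Esub (ζ : ℕ → E) (n : ℕ) : Submodule ℝ E :=
  Submodule.span ℝ (ζ '' {k : ℕ | k ≤ n})

/-- `F_n(u) = E_n ⊕ ℝ u`. -/
noncomputable def Fsub (ζ : ℕ → E) (n : ℕ) (u : E) : Submodule ℝ E :=
  Esub ζ n ⊔ Submodule.span ℝ {u}

/-- `F_n(u)⁺ = E_n ⊕ ℝ⁺ u = {v + t u : v ∈ E_n, t > 0}`. -/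
def FsubPlus (ζ : ℕ → E) (n : ℕ) (u : E) : Set E :=
  {w | ∃ v ∈ Esub ζ n, ∃ t : ℝ, 0 < t ∧ w = v + t • u}

/-- The derivative of `J_λ` at `u` applied to `w`: `J_λ'(u)[w] = q_λ(u,w) − I'(u)[w]`. -/
noncomputable def Jderiv (lam : ℕ → ℝ) (ζ : ℕ → E) (I' : E → E →L[ℝ] ℝ)
    (lambda : ℝ) (u w : E) : ℝ :=
  qForm lam ζ lambda u w - I' u w

/-- The Nehari–Pankov set `NP_λ = {u ∈ E ∖ E_n : J_λ'(u)|_{F_n(u)} = 0}`. -/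
def NehariPankov (lam : ℕ → ℝ) (ζ : ℕ → E) (I' : E → E →L[ℝ] ℝ)
    (n : ℕ) (lambda : ℝ) : Set E :=
  {u | u ∉ Esub ζ n ∧ ∀ w ∈ Fsub ζ n u, Jderiv lam ζ I' lambda u w = 0}

/-- The ground-state level `c_λ = inf_{NP_λ} J_λ`. -/
noncomputable def clevel (lam : ℕ → ℝ) (ζ : ℕ → E) (I : E → ℝ) (I' : E → E →L[ℝ] ℝ)
    (n : ℕ) (lambda : ℝ) : ℝ :=
  sInf (Jfun lam ζ I lambda '' NehariPankov lam ζ I' n lambda)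

/-- The set `Q_λ` of minimizers of `J_λ` on `NP_λ`. -/
def Qset (lam : ℕ → ℝ) (ζ : ℕ → E) (I : E → ℝ) (I' : E → E →L[ℝ] ℝ)
    (n : ℕ) (lambda : ℝ) : Set E :=
  {u | u ∈ NehariPankov lam ζ I' n lambda ∧
    Jfun lam ζ I lambda u = clevel lam ζ I I' n lambda}

/-- `E_n^⊥ = {w ∈ E : ⟨w, ζ_k⟩_H = 0 for k = 0, …, n}`. -/
def EsubPerp (lam : ℕ → ℝ) (ζ : ℕ → E) (n : ℕ) : Set E :=
  {w | ∀ k ≤ n, coefH lam ζ w k = 0}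

/-!
Write `c l` for the ground-state level and `M u = ‖u‖_H² / 2` for the mass. Since `J_l` depends
affinely on `l` with slope `-M`, maximising `J_k` over the half-space `F_n(u)⁺` of a ground state
`u` at `l` gives `c k ≤ c l - (k - l) M w` with `w` close to `u` when `k` is close to `l`. Hence
`M u = m` as soon as `l` is a local minimum of `f k = c k + k m`.

Suppose now that `0 < m < M u` for a ground state `u` at `l` in the gap `(a, b)`. By the
inequality above, `f` is less than `f l` just to the right of `l`. Testing with an eigenvector for
`b` gives `c k = o(b - k)` as `k → b`, so `f p < b m` for `p` near `b`, whereas `c > 0` gives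
`f q > q m`, which exceeds `f p` for `q` close enough to `b`. So the minimum of the lower
semicontinuous function `f` over `[l, q]` is attained inside, and any ground state there has mass
`m`. The set of masses is thus closed downwards in `(0, ∞)`.
-/

theorem eq_Ioi_or_Ioo_subset_subset_Ioc {α : Type*} [ConditionallyCompleteLinearOrder α]
    {S : Set α} {a : α} (hS : S.Nonempty) (ha : S ⊆ Ioi a) (h : ∀ x ∈ S, Ioo a x ⊆ S) :
    S = Ioi a ∨ ∃ g, a < g ∧ Ioo a g ⊆ S ∧ S ⊆ Ioc a g := by
  by_cases hbdd : BddAbove S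
  · obtain ⟨x, hx⟩ := hS
    refine .inr ⟨sSup S, (ha hx).trans_le (le_csSup hbdd hx), fun y hy => ?_, fun y hy =>
      ⟨ha hy, le_csSup hbdd hy⟩⟩
    obtain ⟨z, hz, hyz⟩ := exists_lt_of_lt_csSup ⟨x, hx⟩ hy.2
    exact h z hz ⟨hy.1, hyz⟩
  · refine .inl (ha.antisymm fun y hy => ?_)
    obtain ⟨z, hz, hyz⟩ := not_bddAbove_iff.1 hbdd y
    exact h z hz ⟨hy, hyz⟩

section WeakConvergence

variable {X : Type*} [NormedAddCommGroup X]

/-- Weak convergence `u j ⇀ a` of a sequence in a real normed space, tested on continuous linear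
functionals as in hypothesis (I1). -/
def TendstoWeakly [NormedSpace ℝ X] (u : ℕ → X) (a : X) : Prop :=
  ∀ f : X →L[ℝ] ℝ, Tendsto (fun j => f (u j)) atTop (𝓝 (f a))

namespace TendstoWeakly

theorem of_tendsto [NormedSpace ℝ X] {u : ℕ → X} {a : X} (h : Tendsto u atTop (𝓝 a)) :
    TendstoWeakly u a :=
  fun f => (f.continuous.tendsto a).comp h

theorem const_smul_add_const [NormedSpace ℝ X] {u : ℕ → X} {a : X} (h : TendstoWeakly u a)
    (t : ℝ) (v : X) : TendstoWeakly (fun j => t • u j + v) (t • a + v) := fun f => by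
  simpa only [map_add, map_smul] using ((h f).const_smul t).add_const (f v)

variable [InnerProductSpace ℝ X]

theorem mem_orthogonal {u : ℕ → X} {a : X} {V : Submodule ℝ X} (h : TendstoWeakly u a)
    (hu : ∀ j, u j ∈ Vᗮ) : a ∈ Vᗮ := by
  refine V.mem_orthogonal a |>.2 fun v hv => tendsto_nhds_unique (h (innerSL ℝ v)) ?_
  simpa only [innerSL_apply_apply, Submodule.inner_right_of_mem_orthogonal hv (hu _)] using
    tendsto_const_nhds

end TendstoWeakly

variable [InnerProductSpace ℝ X] [CompleteSpace X]

theorem exists_subseq_tendstoWeakly_of_separableSpace [TopologicalSpace.SeparableSpace X]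
    {u : ℕ → X} {r : ℝ} (hu : ∀ j, ‖u j‖ ≤ r) :
    ∃ (a : X) (φ : ℕ → ℕ), StrictMono φ ∧ TendstoWeakly (u ∘ φ) a := by
  let dual := InnerProductSpace.toDual ℝ X
  obtain ⟨a, -, φ, hφ, hlim⟩ := WeakDual.isSeqCompact_closedBall ℝ X 0 r
    (x := fun j => StrongDual.toWeakDual (dual (u j))) (fun j => by simpa [dual] using hu j)
  refine ⟨dual.symm (WeakDual.toStrongDual a), φ, hφ, fun f => ?_⟩
  have hf (x : X) : f x = ⟪x, dual.symm f⟫_ℝ := by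
    rw [real_inner_comm, InnerProductSpace.toDual_symm_apply]
  simp only [hf, dual, InnerProductSpace.toDual_symm_apply]
  exact ((WeakDual.eval_continuous (dual.symm f)).tendsto a).comp hlim

theorem exists_subseq_tendstoWeakly {u : ℕ → X} {r : ℝ} (hu : ∀ j, ‖u j‖ ≤ r) :
    ∃ (a : X) (φ : ℕ → ℕ), StrictMono φ ∧ TendstoWeakly (u ∘ φ) a := by
  let K := (Submodule.span ℝ (range u)).topologicalClosure
  have : CompleteSpace K := (Submodule.isClosed_topologicalClosure _).completeSpace_coe
  have : TopologicalSpace.SeparableSpace K :=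
    (countable_range u).isSeparable.span.closure.separableSpace
  have huK (j : ℕ) : u j ∈ K :=
    Submodule.le_topologicalClosure _ (Submodule.subset_span (mem_range_self j))
  obtain ⟨a, φ, hφ, hlim⟩ :=
    exists_subseq_tendstoWeakly_of_separableSpace (u := fun j => (⟨u j, huK j⟩ : K)) hu
  exact ⟨a, φ, hφ, fun f => hlim (f.comp K.subtypeL)⟩

end WeakConvergence

theorem isCompact_of_isClosed_isBounded_of_subset_submodule {X : Type*} [NormedAddCommGroup X]
    [NormedSpace ℝ X] {F : Submodule ℝ X} [FiniteDimensional ℝ F] {K : Set X} (hK : IsClosed K)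
    (hb : Bornology.IsBounded K) (hKF : K ⊆ F) : IsCompact K := by
  have hcompact : IsCompact ((↑) ⁻¹' K : Set F) :=
    Metric.isCompact_of_isClosed_isBounded (hK.preimage continuous_subtype_val)
      (Bornology.isBounded_image_subtype_val.1 (hb.subset (image_preimage_subset _ K)))
  rw [← inter_eq_right.2 hKF, ← Subtype.image_preimage_coe]
  exact hcompact.image continuous_subtype_val

section HalfSpace

variable {X : Type*}

/-- The closed half-space `V + [0, ∞) u` of `V + ℝ u`. When `u ∉ V`, its points outside `V` form
the open half-space `F(u)⁺ = V + (0, ∞) u`. -/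
def halfSpace [AddCommGroup X] [Module ℝ X] (V : Submodule ℝ X) (u : X) : Set X :=
  {w | ∃ v ∈ V, ∃ t : ℝ, 0 ≤ t ∧ w = t • u + v}

section Module

variable [AddCommGroup X] [Module ℝ X] {V : Submodule ℝ X} {u w x : X}

theorem smul_add_mem_sup_span {v : X} (hv : v ∈ V) (t : ℝ) :
    t • u + v ∈ V ⊔ Submodule.span ℝ {u} :=
  add_comm v (t • u) ▸ Submodule.add_mem_sup hv (Submodule.mem_span_singleton.2 ⟨t, rfl⟩)

theorem exists_smul_add_of_mem_sup_span (h : w ∈ V ⊔ Submodule.span ℝ {u}) :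
    ∃ v ∈ V, ∃ t : ℝ, w = t • u + v := by
  obtain ⟨v, hv, y, hy, rfl⟩ := Submodule.mem_sup.1 h
  obtain ⟨t, rfl⟩ := Submodule.mem_span_singleton.1 hy
  exact ⟨v, hv, t, add_comm _ _⟩

theorem halfSpace_subset_sup_span :
    halfSpace V u ⊆ (V ⊔ Submodule.span ℝ {u} : Submodule ℝ X) := by
  rintro _ ⟨v, hv, t, -, rfl⟩
  exact smul_add_mem_sup_span hv t

theorem smul_mem_halfSpace {t : ℝ} (ht : 0 ≤ t) : t • u ∈ halfSpace V u :=
  ⟨0, V.zero_mem, t, ht, (add_zero _).symm⟩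

theorem halfSpace_subset_of_mem (hw : w ∈ halfSpace V u) : halfSpace V w ⊆ halfSpace V u := by
  obtain ⟨v, hv, t, ht, rfl⟩ := hw
  rintro _ ⟨v', hv', s, hs, rfl⟩
  exact ⟨s • v + v', V.add_mem (V.smul_mem s hv) hv', s * t, mul_nonneg hs ht, by module⟩

theorem mem_halfSpace_of_sub_mem (h : w - u ∈ V) : w ∈ halfSpace V u :=
  ⟨w - u, h, 1, zero_le_one, by module⟩

theorem halfSpace_eq_of_sub_mem (h : w - u ∈ V) : halfSpace V w = halfSpace V u :=
  (halfSpace_subset_of_mem (mem_halfSpace_of_sub_mem h)).antisymm <|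
    halfSpace_subset_of_mem (mem_halfSpace_of_sub_mem (neg_sub w u ▸ V.neg_mem h))

theorem mem_halfSpace_comm (hw : w ∈ halfSpace V u) (hwV : w ∉ V) : u ∈ halfSpace V w := by
  obtain ⟨v, hv, t, ht, rfl⟩ := hw
  have ht0 : t ≠ 0 := by
    rintro rfl
    exact hwV (by simpa using hv)
  refine ⟨-t⁻¹ • v, V.smul_mem _ hv, t⁻¹, inv_nonneg.2 ht, ?_⟩
  rw [smul_add, inv_smul_smul₀ ht0]
  module

theorem halfSpace_eq_of_mem (hw : w ∈ halfSpace V u) (hwV : w ∉ V) :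
    halfSpace V w = halfSpace V u :=
  (halfSpace_subset_of_mem hw).antisymm (halfSpace_subset_of_mem (mem_halfSpace_comm hw hwV))

theorem eventually_add_smul_mem_halfSpace (hx : x ∈ V ⊔ Submodule.span ℝ {w}) :
    ∀ᶠ τ : ℝ in 𝓝 0, w + τ • x ∈ halfSpace V w := by
  obtain ⟨v, hv, s, rfl⟩ := exists_smul_add_of_mem_sup_span hx
  have hpos : ∀ᶠ τ : ℝ in 𝓝 0, 0 < 1 + τ * s :=
    (Continuous.tendsto' (by fun_prop) 0 1 (by simp)).eventually_const_lt one_pos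
  filter_upwards [hpos] with τ hτ
  exact ⟨τ • v, V.smul_mem τ hv, 1 + τ * s, hτ.le, by module⟩

end Module

variable [NormedAddCommGroup X] [InnerProductSpace ℝ X] {V : Submodule ℝ X} {u e : X}

theorem halfSpace_eq_of_mem_orthogonal (he : e ∈ Vᗮ) :
    halfSpace V e = {w | w ∈ V ⊔ Submodule.span ℝ {e} ∧ 0 ≤ ⟪w, e⟫_ℝ} := by
  have hinner {v : X} (hv : v ∈ V) (t : ℝ) : ⟪t • e + v, e⟫_ℝ = t * ‖e‖ ^ 2 := by
    rw [inner_add_left, real_inner_smul_left, real_inner_self_eq_norm_sq,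
      Submodule.inner_right_of_mem_orthogonal hv he, add_zero]
  refine Subset.antisymm (fun w hw => ⟨halfSpace_subset_sup_span hw, ?_⟩) ?_
  · obtain ⟨v, hv, t, ht, rfl⟩ := hw
    rw [hinner hv]
    positivity
  · rintro w ⟨hw, hwe⟩
    obtain ⟨v, hv, t, rfl⟩ := exists_smul_add_of_mem_sup_span hw
    rw [hinner hv] at hwe
    rcases eq_or_ne e 0 with rfl | he0
    · exact ⟨v, hv, 0, le_rfl, by simp⟩
    · exact ⟨v, hv, t, nonneg_of_mul_nonneg_left hwe (by positivity), rfl⟩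

theorem isClosed_halfSpace [FiniteDimensional ℝ V] (u : X) : IsClosed (halfSpace V u) := by
  obtain ⟨v, hv, e, he, rfl⟩ := V.exists_add_mem_mem_orthogonal u
  rw [halfSpace_eq_of_sub_mem (u := e) (by simpa using hv), halfSpace_eq_of_mem_orthogonal he]
  exact (Submodule.closed_of_finiteDimensional (V ⊔ Submodule.span ℝ {e})).inter
    (isClosed_le (f := fun _ => 0) (g := fun w : X => ⟪w, e⟫_ℝ) (by fun_prop) (by fun_prop))

theorem notMem_of_mem_orthogonal (he : e ∈ Vᗮ) (he0 : e ≠ 0) : e ∉ V := fun h =>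
  he0 (inner_self_eq_zero.1 (Submodule.inner_right_of_mem_orthogonal (𝕜 := ℝ) h he))

theorem exists_unit_orthogonal_halfSpace_eq [V.HasOrthogonalProjection] (hu : u ∉ V) :
    ∃ e ∈ Vᗮ, ‖e‖ = 1 ∧ halfSpace V u = halfSpace V e := by
  obtain ⟨v, hv, w, hw, rfl⟩ := V.exists_add_mem_mem_orthogonal u
  have hw0 : w ≠ 0 := by
    rintro rfl
    exact hu (by simpa using hv)
  have hnorm : ‖‖w‖⁻¹ • w‖ = 1 := norm_smul_inv_norm (𝕜 := ℝ) hw0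
  have hmem : ‖w‖⁻¹ • w ∈ Vᗮ := Submodule.smul_mem _ _ hw
  refine ⟨‖w‖⁻¹ • w, hmem, hnorm, ?_⟩
  rw [halfSpace_eq_of_sub_mem (u := w) (by simpa using hv)]
  refine (halfSpace_eq_of_mem (smul_mem_halfSpace (by positivity)) ?_).symm
  exact notMem_of_mem_orthogonal hmem (norm_ne_zero_iff.1 (by rw [hnorm]; exact one_ne_zero))

end HalfSpace

section Nonlinearity

variable {X : Type*} [NormedAddCommGroup X] [NormedSpace ℝ X]

/-- The assumptions (I1)–(I4) on the nonlinearity `I`, where `I'` is its Gateaux derivative. The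
inequality of (I4) is `pankov_le`, and its strict case is `pankov_lt`. -/
structure PankovNonlinearity (I : X → ℝ) (I' : X → X →L[ℝ] ℝ) : Prop where
  hasLineDerivAt : ∀ u v, HasLineDerivAt ℝ I (I' u v) u v
  tendsto_of_tendstoWeakly : ∀ {u : ℕ → X} {a : X}, TendstoWeakly u a →
    Tendsto (fun j => I (u j)) atTop (𝓝 (I a))
  map_zero : I 0 = 0
  tendsto_div_sq_zero : ∀ {u : X}, u ≠ 0 →
    Tendsto (fun t : ℝ => I (t • u) / t ^ 2) (𝓝[>] 0) (𝓝 0)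
  tendsto_div_sq_atTop : ∀ {u : X}, u ≠ 0 →
    Tendsto (fun t : ℝ => I (t • u) / t ^ 2) atTop atTop
  pankov_le : ∀ {u : X}, u ≠ 0 → ∀ (v : X) {s : ℝ}, -1 ≤ s →
    I u - I ((1 + s) • u + v) + I' u ((s * (s / 2 + 1)) • u + (1 + s) • v) ≤ 0
  pankov_lt : ∀ {u : X}, u ≠ 0 → ∀ {s : ℝ}, -1 ≤ s → s ≠ 0 →
    I u - I ((1 + s) • u) + I' u ((s * (s / 2 + 1)) • u) < 0

namespace PankovNonlinearity

variable {I : X → ℝ} {I' : X → X →L[ℝ] ℝ} {u v : X} {t : ℝ}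

theorem continuous (hI : PankovNonlinearity I I') : Continuous I :=
  SeqContinuous.continuous fun _ _ h => hI.tendsto_of_tendstoWeakly (.of_tendsto h)

theorem add_le_smul_add (hI : PankovNonlinearity I I') (hu : u ≠ 0) (ht : 0 ≤ t) (v : X) :
    I u + (t ^ 2 - 1) / 2 * I' u u + t * I' u v ≤ I (t • u + v) := by
  have h := hI.pankov_le hu v (s := t - 1) (by linarith)
  simp only [map_add, map_smul, smul_eq_mul, add_sub_cancel] at h
  linarith

theorem add_lt_smul (hI : PankovNonlinearity I I') (hu : u ≠ 0) (ht : 0 ≤ t) (ht1 : t ≠ 1) :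
    I u + (t ^ 2 - 1) / 2 * I' u u < I (t • u) := by
  have h := hI.pankov_lt hu (s := t - 1) (by linarith) (sub_ne_zero.2 ht1)
  simp only [map_smul, smul_eq_mul, add_sub_cancel] at h
  linarith

theorem two_mul_lt (hI : PankovNonlinearity I I') (hu : u ≠ 0) : 2 * I u < I' u u := by
  have h := hI.add_lt_smul hu le_rfl zero_ne_one
  rw [zero_smul, hI.map_zero] at h
  linarith

theorem sq_mul_lt (hI : PankovNonlinearity I I') (hu : u ≠ 0) (ht : 1 < t) :
    t ^ 2 * I u < I (t • u) := by
  have h := hI.add_lt_smul hu (zero_le_one.trans ht.le) ht.ne'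
  have hsq : 1 < t ^ 2 := one_lt_pow₀ ht two_ne_zero
  linarith [mul_lt_mul_of_pos_left (hI.two_mul_lt hu) (sub_pos.2 hsq)]

theorem pos (hI : PankovNonlinearity I I') (hu : u ≠ 0) : 0 < I u := by
  have nonneg {w : X} (hw : w ≠ 0) : 0 ≤ I w := by
    refine le_of_tendsto (hI.tendsto_div_sq_zero hw) ?_
    filter_upwards [Ioo_mem_nhdsGT one_pos] with t ⟨ht0, ht1⟩
    have h := hI.sq_mul_lt (smul_ne_zero ht0.ne' hw) ((one_lt_inv₀ ht0).2 ht1)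
    rw [inv_smul_smul₀ ht0.ne', inv_pow, inv_mul_eq_div] at h
    exact h.le
  have hhalf : (2⁻¹ : ℝ) • u ≠ 0 := smul_ne_zero (by norm_num) hu
  have h := hI.sq_mul_lt hhalf one_lt_two
  rw [smul_inv_smul₀ two_ne_zero] at h
  linarith [nonneg hhalf]

theorem eventually_sq_lt_smul (hI : PankovNonlinearity I I') (hu : u ≠ 0) :
    ∀ᶠ p : ℝ × X in atTop ×ˢ 𝓝 u, p.1 ^ 2 < I (p.1 • p.2) := by
  obtain ⟨T, hT, hT1⟩ := (((hI.tendsto_div_sq_atTop hu).eventually_gt_atTop 1).and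
    (eventually_gt_atTop 0)).exists
  rw [one_lt_div (by positivity)] at hT
  have hnear : ∀ᶠ y in 𝓝 u, T ^ 2 < I (T • y) :=
    (hI.continuous.comp (continuous_const_smul T)).continuousAt.eventually_const_lt hT
  filter_upwards [(eventually_gt_atTop T).prod_mk hnear] with ⟨t, y⟩ ⟨ht, hy⟩
  have hTy : T • y ≠ 0 := by
    intro h
    rw [h, hI.map_zero] at hy
    exact (sq_nonneg T).not_gt hy
  have h := hI.sq_mul_lt hTy ((one_lt_div hT1).2 ht)
  rw [smul_smul, div_mul_cancel₀ t hT1.ne', div_pow, div_mul_eq_mul_div,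
    div_lt_iff₀ (by positivity)] at h
  nlinarith [pow_pos (hT1.trans ht) 2, pow_pos hT1 2]

theorem isCompact_le_norm_sq (hI : PankovNonlinearity I I') (F : Submodule ℝ X)
    [FiniteDimensional ℝ F] : IsCompact {w | w ∈ F ∧ I w ≤ ‖w‖ ^ 2} := by
  have hcont := hI.continuous
  refine isCompact_of_isClosed_isBounded_of_subset_submodule (F := F)
    (F.closed_of_finiteDimensional.inter (isClosed_le hcont (by fun_prop))) ?_ fun w hw => hw.1
  have hsphere : IsCompact (F ∩ Metric.sphere (0 : X) 1) :=
    isCompact_of_isClosed_isBounded_of_subset_submodule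
      (F.closed_of_finiteDimensional.inter Metric.isClosed_sphere)
      (Metric.isBounded_sphere.subset inter_subset_right) inter_subset_left
  have hlarge : ∀ᶠ p : ℝ × X in atTop ×ˢ 𝓝ˢ (F ∩ Metric.sphere (0 : X) 1),
      p.1 ^ 2 < I (p.1 • p.2) :=
    hsphere.mem_prod_nhdsSet_of_forall fun x hx =>
      hI.eventually_sq_lt_smul (Metric.ne_of_mem_sphere hx.2 one_ne_zero)
  obtain ⟨T, hT⟩ := eventually_atTop.1 hlarge.curry
  refine (Metric.isBounded_closedBall (x := (0 : X)) (r := max T 0)).subset fun w hw => ?_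
  by_contra hfar
  rw [mem_closedBall_zero_iff, not_le, max_lt_iff] at hfar
  have h := (hT ‖w‖ hfar.1.le).self_of_nhdsSet (‖w‖⁻¹ • w)
    ⟨F.smul_mem _ hw.1, by simp [norm_smul, hfar.2.ne']⟩
  rw [smul_inv_smul₀ hfar.2.ne'] at h
  exact hw.2.not_gt h

end PankovNonlinearity

end Nonlinearity

section ShiftedForm

variable {X H : Type*} [NormedAddCommGroup X] [InnerProductSpace ℝ X] [NormedAddCommGroup H]
  [InnerProductSpace ℝ H]

/-- The form `⟨(A - l) u, v⟩_H` of an operator `A` with form domain `X`, embedded in `H` by `ι`.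
It is encoded through `⟪u, v⟫_X = ⟨(1 + A) u, v⟩_H`. -/
noncomputable def shiftedForm (ι : X →L[ℝ] H) (l : ℝ) (u v : X) : ℝ :=
  ⟪u, v⟫_ℝ - (1 + l) * ⟪ι u, ι v⟫_ℝ

/-- The action functional `J_l`, where `l` is the shift of the quadratic part. -/
noncomputable def action (ι : X →L[ℝ] H) (I : X → ℝ) (l : ℝ) (u : X) : ℝ :=
  shiftedForm ι l u u / 2 - I u

variable {ι : X →L[ℝ] H} {I : X → ℝ} {I' : X → X →L[ℝ] ℝ} {k l t : ℝ} {u v w : X}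

theorem shiftedForm_self : shiftedForm ι l u u = ‖u‖ ^ 2 - (1 + l) * ‖ι u‖ ^ 2 := by
  simp only [shiftedForm, real_inner_self_eq_norm_sq]

theorem shiftedForm_comm : shiftedForm ι l u v = shiftedForm ι l v u := by
  simp only [shiftedForm, real_inner_comm u v, real_inner_comm (ι u)]

theorem shiftedForm_smul_self : shiftedForm ι l (t • u) (t • u) = t ^ 2 * shiftedForm ι l u u := by
  simp only [shiftedForm_self, map_smul, norm_smul, Real.norm_eq_abs, mul_pow, sq_abs]
  ring

theorem shiftedForm_smul_add_self : shiftedForm ι l (t • u + v) (t • u + v) =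
    t ^ 2 * shiftedForm ι l u u + 2 * t * shiftedForm ι l u v + shiftedForm ι l v v := by
  simp only [shiftedForm, map_add, map_smul, inner_add_right, inner_add_left,
    real_inner_smul_right, real_inner_smul_left, real_inner_comm u v, real_inner_comm (ι u) (ι v)]
  ring

theorem action_eq_add_shift :
    action ι I k u = action ι I l u - (k - l) * (‖ι u‖ ^ 2 / 2) := by
  simp only [action, shiftedForm_self]
  ring

theorem continuous_action (hI : Continuous I) :
    Continuous fun p : ℝ × X => action ι I p.1 p.2 := by
  simp only [action, shiftedForm]
  fun_prop

theorem hasLineDerivAt_action (hI : HasLineDerivAt ℝ I (I' u v) u v) :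
    HasLineDerivAt ℝ (action ι I l) (shiftedForm ι l u v - I' u v) u v := by
  have hform : (fun τ : ℝ => shiftedForm ι l (u + τ • v) (u + τ • v)) = fun τ =>
      τ ^ 2 * shiftedForm ι l v v + 2 * τ * shiftedForm ι l u v + shiftedForm ι l u u := by
    ext τ
    rw [add_comm u, shiftedForm_smul_add_self, shiftedForm_comm (u := v) (v := u)]
  have hquad : HasDerivAt (fun τ : ℝ => shiftedForm ι l (u + τ • v) (u + τ • v))
      (2 * shiftedForm ι l u v) 0 := by
    rw [hform]
    have hsq := (hasDerivAt_pow 2 (0 : ℝ)).mul_const (shiftedForm ι l v v)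
    have hlin := ((hasDerivAt_id (0 : ℝ)).const_mul 2).mul_const (shiftedForm ι l u v)
    exact ((hsq.add hlin).add_const (shiftedForm ι l u u)).congr_deriv (by simp)
  exact ((hquad.div_const 2).sub hI).congr_deriv (by ring)

theorem le_norm_sq_of_action_nonneg (hl : -1 ≤ l) (h : 0 ≤ action ι I l u) : I u ≤ ‖u‖ ^ 2 := by
  rw [action, shiftedForm_self] at h
  nlinarith [sq_nonneg ‖u‖, mul_nonneg (neg_le_iff_add_nonneg'.1 hl) (sq_nonneg ‖ι u‖)]

end ShiftedForm

section NehariPankov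

variable {X H : Type*} [NormedAddCommGroup X] [InnerProductSpace ℝ X] [NormedAddCommGroup H]
  [InnerProductSpace ℝ H]

/-- The Nehari–Pankov set `NP_l` relative to the subspace `V`. -/
def nehariPankovSet (ι : X →L[ℝ] H) (V : Submodule ℝ X) (I' : X → X →L[ℝ] ℝ) (l : ℝ) : Set X :=
  {u | u ∉ V ∧ ∀ w ∈ V ⊔ Submodule.span ℝ {u}, shiftedForm ι l u w = I' u w}

/-- The ground-state level `c_l`. -/
noncomputable def groundLevel (ι : X →L[ℝ] H) (V : Submodule ℝ X) (I : X → ℝ)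
    (I' : X → X →L[ℝ] ℝ) (l : ℝ) : ℝ :=
  sInf (action ι I l '' nehariPankovSet ι V I' l)

/-- The set `Q_l` of ground states. -/
def groundStates (ι : X →L[ℝ] H) (V : Submodule ℝ X) (I : X → ℝ) (I' : X → X →L[ℝ] ℝ) (l : ℝ) :
    Set X :=
  {u | u ∈ nehariPankovSet ι V I' l ∧ action ι I l u = groundLevel ι V I I' l}

/-- The masses `‖u‖_H² / 2` of the ground states with parameter in the gap `(a, b)`. -/
def massSet (ι : X →L[ℝ] H) (V : Submodule ℝ X) (a b : ℝ) (I : X → ℝ) (I' : X → X →L[ℝ] ℝ) :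
    Set ℝ :=
  {m | ∃ l ∈ Ioo a b, ∃ u ∈ groundStates ι V I I' l, m = ‖ι u‖ ^ 2 / 2}

variable {ι : X →L[ℝ] H} {V : Submodule ℝ X} {I : X → ℝ} {I' : X → X →L[ℝ] ℝ} {l t : ℝ} {u v : X}

theorem ne_zero_of_mem_nehariPankovSet (hu : u ∈ nehariPankovSet ι V I' l) : u ≠ 0 :=
  ne_of_mem_of_not_mem V.zero_mem hu.1 |>.symm

theorem shiftedForm_self_of_mem_nehariPankovSet (hu : u ∈ nehariPankovSet ι V I' l) :
    shiftedForm ι l u u = I' u u :=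
  hu.2 u (Submodule.mem_sup_right (Submodule.mem_span_singleton_self u))

theorem action_smul_add_le (hI : PankovNonlinearity I I') (hu : u ∈ nehariPankovSet ι V I' l)
    (hv : v ∈ V) (ht : 0 ≤ t) :
    action ι I l (t • u + v) ≤ action ι I l u + shiftedForm ι l v v / 2 := by
  have h := hI.add_le_smul_add (ne_zero_of_mem_nehariPankovSet hu) ht v
  rw [← shiftedForm_self_of_mem_nehariPankovSet hu, ← hu.2 v (Submodule.mem_sup_left hv)] at h
  rw [action, action, shiftedForm_smul_add_self]
  linarith

theorem action_smul_lt (hI : PankovNonlinearity I I') (hu : u ∈ nehariPankovSet ι V I' l)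
    (ht : 0 ≤ t) (ht1 : t ≠ 1) : action ι I l (t • u) < action ι I l u := by
  have h := hI.add_lt_smul (ne_zero_of_mem_nehariPankovSet hu) ht ht1
  rw [← shiftedForm_self_of_mem_nehariPankovSet hu] at h
  rw [action, action, shiftedForm_smul_self]
  linarith

end NehariPankov

section SpectralGap

variable {X H : Type*} [NormedAddCommGroup X] [InnerProductSpace ℝ X] [NormedAddCommGroup H]
  [InnerProductSpace ℝ H]

/-- The operator `A` with form domain `X`, embedded in `H` by `ι`, has `A ≤ a` on the
finite-dimensional space `V`, `A ≥ b` on `Vᗮ`, and `b` is an eigenvalue of `A` on `Vᗮ`. As in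
`shiftedForm`, the norm of `X` is that of `1 + A`. -/
structure SpectralGap (ι : X →L[ℝ] H) (V : Submodule ℝ X) (a b : ℝ) : Prop where
  injective : Function.Injective ι
  finiteDimensional : FiniteDimensional ℝ V
  neg_one_le : -1 ≤ a
  lt : a < b
  norm_sq_le : ∀ v ∈ V, ‖v‖ ^ 2 ≤ (1 + a) * ‖ι v‖ ^ 2
  le_norm_sq : ∀ w ∈ Vᗮ, (1 + b) * ‖ι w‖ ^ 2 ≤ ‖w‖ ^ 2
  exists_eigenvector : ∃ z ∈ Vᗮ, z ≠ 0 ∧ ∀ w, ⟪z, w⟫_ℝ = (1 + b) * ⟪ι z, ι w⟫_ℝ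

namespace SpectralGap

variable {ι : X →L[ℝ] H} {V : Submodule ℝ X} {a b l : ℝ} {I : X → ℝ} {I' : X → X →L[ℝ] ℝ}
  {u v w : X}

section Form

variable (gap : SpectralGap ι V a b)
include gap

theorem norm_apply_pos (hu : u ≠ 0) : 0 < ‖ι u‖ :=
  norm_pos_iff.2 ((map_ne_zero_iff ι gap.injective).2 hu)

theorem shiftedForm_neg (hl : a < l) (hv : v ∈ V) (hv0 : v ≠ 0) : shiftedForm ι l v v < 0 := by
  rw [shiftedForm_self]
  nlinarith [gap.norm_sq_le v hv, pow_pos (gap.norm_apply_pos hv0) 2]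

theorem shiftedForm_nonpos (hl : a < l) (hv : v ∈ V) : shiftedForm ι l v v ≤ 0 := by
  rcases eq_or_ne v 0 with rfl | hv0
  · simp [shiftedForm_self]
  · exact (gap.shiftedForm_neg hl hv hv0).le

theorem one_add_pos : 0 < 1 + b := by linarith [gap.neg_one_le, gap.lt]

theorem le_shiftedForm (hl : -1 ≤ l) (hw : w ∈ Vᗮ) :
    (b - l) / (1 + b) * ‖w‖ ^ 2 ≤ shiftedForm ι l w w := by
  have hb := gap.one_add_pos
  have h := mul_le_mul_of_nonneg_left (gap.le_norm_sq w hw) (neg_le_iff_add_nonneg'.1 hl)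
  rw [shiftedForm_self, div_mul_eq_mul_div, div_le_iff₀ hb]
  linarith

theorem neg_one_le_of_mem (hl : l ∈ Ioo a b) : -1 ≤ l := gap.neg_one_le.trans hl.1.le

theorem coercivity_pos (hl : l ∈ Ioo a b) : 0 < (b - l) / (1 + b) :=
  div_pos (sub_pos.2 hl.2) gap.one_add_pos

theorem massSet_subset_Ioi : massSet ι V a b I I' ⊆ Ioi 0 := by
  rintro _ ⟨l, -, u, hu, rfl⟩
  exact half_pos (pow_pos (gap.norm_apply_pos (ne_zero_of_mem_nehariPankovSet hu.1)) 2)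

end Form

section Existence

variable (gap : SpectralGap ι V a b) (hI : PankovNonlinearity I I') (hl : l ∈ Ioo a b)
include gap hI hl

theorem action_nonpos (hv : v ∈ V) : action ι I l v ≤ 0 := by
  rcases eq_or_ne v 0 with rfl | hv0
  · simp [action, shiftedForm_self, hI.map_zero]
  · rw [action]
    linarith [gap.shiftedForm_nonpos hl.1 hv, hI.pos hv0]

theorem exists_action_pos (hu : u ∉ V) : ∃ w ∈ halfSpace V u, 0 < action ι I l w := by
  have := gap.finiteDimensional
  obtain ⟨e, he, hnorm, hspace⟩ := exists_unit_orthogonal_halfSpace_eq hu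
  have he0 : e ≠ 0 := norm_ne_zero_iff.1 (hnorm ▸ one_ne_zero)
  have hform := gap.le_shiftedForm (gap.neg_one_le_of_mem hl) he
  rw [hnorm, one_pow, mul_one] at hform
  have hpos := (gap.coercivity_pos hl).trans_le hform
  obtain ⟨t, ht, ht0⟩ := (((hI.tendsto_div_sq_zero he0).eventually_lt_const (half_pos hpos)).and
    self_mem_nhdsWithin).exists
  replace ht0 : 0 < t := ht0
  rw [div_lt_iff₀ (by positivity)] at ht
  refine ⟨t • e, hspace ▸ smul_mem_halfSpace ht0.le, ?_⟩
  rw [action, shiftedForm_smul_self]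
  linarith

theorem action_lt_of_mem_halfSpace (hu : u ∈ nehariPankovSet ι V I' l) (hw : w ∈ halfSpace V u)
    (hwu : w ≠ u) : action ι I l w < action ι I l u := by
  obtain ⟨v, hv, t, ht, rfl⟩ := hw
  rcases eq_or_ne v 0 with rfl | hv0
  · rw [add_zero] at hwu ⊢
    refine action_smul_lt hI hu ht ?_
    rintro rfl
    exact hwu (one_smul ℝ u)
  · linarith [action_smul_add_le hI hu hv ht, gap.shiftedForm_neg hl.1 hv hv0]

theorem action_le_of_mem_halfSpace (hu : u ∈ nehariPankovSet ι V I' l)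
    (hw : w ∈ halfSpace V u) : action ι I l w ≤ action ι I l u := by
  rcases eq_or_ne w u with rfl | hwu
  · exact le_rfl
  · exact (gap.action_lt_of_mem_halfSpace hI hl hu hw hwu).le

theorem action_pos (hu : u ∈ nehariPankovSet ι V I' l) : 0 < action ι I l u :=
  let ⟨_, hw, hpos⟩ := gap.exists_action_pos hI hl hu.1
  hpos.trans_le (gap.action_le_of_mem_halfSpace hI hl hu hw)

theorem exists_isMaxOn_halfSpace (hu : u ∉ V) :
    ∃ w ∈ halfSpace V u, 0 < action ι I l w ∧ IsMaxOn (action ι I l) (halfSpace V u) w := by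
  have := gap.finiteDimensional
  have hl1 := gap.neg_one_le_of_mem hl
  let K : Set X := halfSpace V u ∩ {w | w ∈ V ⊔ Submodule.span ℝ {u} ∧ I w ≤ ‖w‖ ^ 2}
  have hK : IsCompact K := (hI.isCompact_le_norm_sq _).inter_left (isClosed_halfSpace u)
  have mem_K {x : X} (hx : x ∈ halfSpace V u) (h : 0 ≤ action ι I l x) : x ∈ K :=
    ⟨hx, halfSpace_subset_sup_span hx, le_norm_sq_of_action_nonneg hl1 h⟩
  obtain ⟨x, hx, hxpos⟩ := gap.exists_action_pos hI hl hu
  have hcont : Continuous (action ι I l) :=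
    (continuous_action hI.continuous).comp (Continuous.prodMk_right l)
  obtain ⟨w, hwK, hmax⟩ := hK.exists_isMaxOn ⟨x, mem_K hx hxpos.le⟩ hcont.continuousOn
  have hwpos : 0 < action ι I l w := hxpos.trans_le (hmax (mem_K hx hxpos.le))
  refine ⟨w, hwK.1, hwpos, fun y hy => ?_⟩
  rcases le_total 0 (action ι I l y) with hy0 | hy0
  · exact hmax (mem_K hy hy0)
  · exact hy0.trans hwpos.le

theorem exists_mem_nehariPankovSet (hu : u ∉ V) :
    ∃ w ∈ nehariPankovSet ι V I' l, w ∈ halfSpace V u := by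
  obtain ⟨w, hw, hwpos, hmax⟩ := gap.exists_isMaxOn_halfSpace hI hl hu
  have hwV : w ∉ V := fun h => (gap.action_nonpos hI hl h).not_gt hwpos
  refine ⟨w, ⟨hwV, fun x hx => ?_⟩, hw⟩
  have hlocal : IsLocalMax (fun τ : ℝ => action ι I l (w + τ • x)) 0 := by
    filter_upwards [eventually_add_smul_mem_halfSpace hx] with τ hτ
    simpa using hmax (halfSpace_subset_of_mem hw hτ)
  exact sub_eq_zero.1 <| hlocal.hasDerivAt_eq_zero (hasLineDerivAt_action (hI.hasLineDerivAt w x))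

end Existence

section GroundStates

variable (gap : SpectralGap ι V a b) (hI : PankovNonlinearity I I')
include gap hI

theorem action_add_le_of_tendstoWeakly {L C : ℕ → ℝ} {x : ℕ → X} {y : X}
    {c r : ℝ} (hL : ∀ j, L j ∈ Ioo a b) (hLl : Tendsto L atTop (𝓝 l)) (hx : TendstoWeakly x y)
    (hperp : ∀ j, x j - y ∈ Vᗮ) (hr : ∀ j, r ≤ ‖x j - y‖ ^ 2)
    (hle : ∀ j, action ι I (L j) (x j) ≤ C j) (hC : Tendsto C atTop (𝓝 c)) :
    action ι I l y + (b - l) / (1 + b) * r / 2 ≤ c := by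
  have hlower (j : ℕ) : shiftedForm ι (L j) y y / 2 + shiftedForm ι (L j) y (x j - y) +
      (b - L j) / (1 + b) * r / 2 - I (x j) ≤ C j := by
    have hsplit := shiftedForm_smul_add_self (ι := ι) (l := L j) (t := 1) (u := y) (v := x j - y)
    rw [one_smul, add_sub_cancel] at hsplit
    have hcoercive := gap.le_shiftedForm (gap.neg_one_le_of_mem (hL j)) (hperp j)
    have hmono := mul_le_mul_of_nonneg_left (hr j) (gap.coercivity_pos (hL j)).le
    have := hle j
    rw [action] at this
    linarith
  have hz : TendstoWeakly (fun j => x j - y) 0 := by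
    simpa [sub_eq_add_neg] using hx.const_smul_add_const 1 (-y)
  have hcross : Tendsto (fun j => shiftedForm ι (L j) y (x j - y)) atTop (𝓝 0) := by
    simpa [shiftedForm] using (hz (innerSL ℝ y)).sub
      ((hLl.const_add 1).mul (hz ((innerSL ℝ (ι y)).comp ι)))
  have hform : Tendsto (fun j => shiftedForm ι (L j) y y) atTop (𝓝 (shiftedForm ι l y y)) :=
    tendsto_const_nhds.sub ((hLl.const_add 1).mul_const _)
  have hcoeff := (((hLl.const_sub b).div_const (1 + b)).mul_const r).div_const 2
  have hlim := (((hform.div_const 2).add hcross).add hcoeff).sub (hI.tendsto_of_tendstoWeakly hx)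
  have h := le_of_tendsto_of_tendsto' hlim hC hlower
  rw [action]
  linarith

theorem exists_mem_nehariPankovSet_le_of_tendsto [CompleteSpace X] {L C : ℕ → ℝ} {x : ℕ → X}
    {c : ℝ} (hL : ∀ j, L j ∈ Ioo a b) (hl : l ∈ Ioo a b) (hLl : Tendsto L atTop (𝓝 l))
    (hx : ∀ j, x j ∈ nehariPankovSet ι V I' (L j)) (hle : ∀ j, action ι I (L j) (x j) ≤ C j)
    (hC : Tendsto C atTop (𝓝 c)) : ∃ w ∈ nehariPankovSet ι V I' l, action ι I l w ≤ c := by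
  have := gap.finiteDimensional
  choose e he hnorm hspace using fun j => exists_unit_orthogonal_halfSpace_eq (hx j).1
  obtain ⟨y, φ, hφ, hweak⟩ := exists_subseq_tendstoWeakly fun j => (hnorm j).le
  have hy : y ∈ Vᗮ := hweak.mem_orthogonal fun j => he (φ j)
  have hlower {v : X} (hv : v ∈ V) {t r : ℝ} (ht : 0 ≤ t)
      (hr : ∀ j, r ≤ ‖t • (e (φ j) - y)‖ ^ 2) :
      action ι I l (t • y + v) + (b - l) / (1 + b) * r / 2 ≤ c := by
    refine gap.action_add_le_of_tendstoWeakly hI (fun j => hL (φ j)) (hLl.comp hφ.tendsto_atTop)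
      (hweak.const_smul_add_const t v) (fun j => ?_) (fun j => ?_) (fun j => ?_)
      (hC.comp hφ.tendsto_atTop)
    · simpa [smul_sub] using Vᗮ.smul_mem t (Vᗮ.sub_mem (he (φ j)) hy)
    · simpa [smul_sub] using hr j
    · refine (gap.action_le_of_mem_halfSpace hI (hL _) (hx _) ?_).trans (hle _)
      exact hspace (φ j) ▸ ⟨v, hv, t, ht, rfl⟩
  -- If the directions `e j` converged weakly to `0`, then testing with `t • e j` would leave only
  -- the coercive quadratic part, so `c` would bound a positive multiple of `t ^ 2` for every `t`.
  have hy0 : y ≠ 0 := by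
    rintro rfl
    have hbound (t : ℝ) (ht : 0 ≤ t) : (b - l) / (1 + b) * t ^ 2 / 2 ≤ c := by
      simpa [action, shiftedForm_self, hI.map_zero] using
        hlower V.zero_mem ht (r := t ^ 2) fun j => by simp [norm_smul, hnorm]
    have htop : Tendsto (fun t : ℝ => (b - l) / (1 + b) * t ^ 2 / 2) atTop atTop :=
      ((tendsto_pow_atTop two_ne_zero).const_mul_atTop (gap.coercivity_pos hl)).atTop_div_const
        two_pos
    obtain ⟨t, hct, ht⟩ := ((htop.eventually_gt_atTop c).and (eventually_ge_atTop 0)).exists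
    exact (hbound t ht).not_gt hct
  obtain ⟨w, hw, v, hv, t, ht, rfl⟩ :=
    gap.exists_mem_nehariPankovSet hI hl (notMem_of_mem_orthogonal hy hy0)
  exact ⟨_, hw, by simpa using hlower hv ht (r := 0) fun j => sq_nonneg _⟩

theorem groundLevel_le (hl : l ∈ Ioo a b) (hu : u ∈ nehariPankovSet ι V I' l) :
    groundLevel ι V I I' l ≤ action ι I l u :=
  csInf_le ⟨0, forall_mem_image.2 fun _ hw => (gap.action_pos hI hl hw).le⟩
    (mem_image_of_mem _ hu)

theorem exists_mem_groundStates [CompleteSpace X] (hl : l ∈ Ioo a b) :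
    ∃ u, u ∈ groundStates ι V I I' l := by
  obtain ⟨z, hz, hz0, -⟩ := gap.exists_eigenvector
  obtain ⟨w, hw, -⟩ := gap.exists_mem_nehariPankovSet hI hl (notMem_of_mem_orthogonal hz hz0)
  obtain ⟨C, -, hC, hmem⟩ := exists_seq_tendsto_sInf ⟨_, mem_image_of_mem (action ι I l) hw⟩
    ⟨0, forall_mem_image.2 fun _ hw => (gap.action_pos hI hl hw).le⟩
  choose x hx hxC using hmem
  obtain ⟨u, hu, hle⟩ := gap.exists_mem_nehariPankovSet_le_of_tendsto hI (fun _ => hl) hl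
    tendsto_const_nhds hx (fun j => (hxC j).le) hC
  exact ⟨u, hu, hle.antisymm (gap.groundLevel_le hI hl hu)⟩

theorem groundLevel_pos [CompleteSpace X] (hl : l ∈ Ioo a b) : 0 < groundLevel ι V I I' l := by
  obtain ⟨u, hu, hlevel⟩ := gap.exists_mem_groundStates hI hl
  exact hlevel ▸ gap.action_pos hI hl hu

theorem lowerSemicontinuousOn_groundLevel [CompleteSpace X] :
    LowerSemicontinuousOn (groundLevel ι V I I') (Ioo a b) := by
  intro l hl c hc
  by_contra hfreq
  obtain ⟨L, hLl, hL⟩ := exists_seq_forall_of_frequently <|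
    (not_eventually.1 hfreq).and_eventually self_mem_nhdsWithin
  choose x hx using fun j => gap.exists_mem_groundStates hI (hL j).2
  obtain ⟨w, hw, hle⟩ := gap.exists_mem_nehariPankovSet_le_of_tendsto hI (fun j => (hL j).2) hl
    (hLl.mono_right nhdsWithin_le_nhds) (fun j => (hx j).1)
    (fun j => (hx j).2.trans_le (not_lt.1 (hL j).1)) tendsto_const_nhds
  exact (hc.trans_le (gap.groundLevel_le hI hl hw)).not_ge hle

theorem eventually_groundLevel_le (hl : l ∈ Ioo a b) (hu : u ∈ groundStates ι V I I' l)
    {U : Set X} (hU : U ∈ 𝓝 u) : ∀ᶠ k in 𝓝 l, ∃ w ∈ U,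
      groundLevel ι V I I' k ≤ groundLevel ι V I I' l - (k - l) * (‖ι w‖ ^ 2 / 2) := by
  have := gap.finiteDimensional
  let K : Set X :=
    (halfSpace V u ∩ {w | w ∈ V ⊔ Submodule.span ℝ {u} ∧ I w ≤ ‖w‖ ^ 2}) \ interior U
  have hK : IsCompact K :=
    ((hI.isCompact_le_norm_sq _).inter_left (isClosed_halfSpace u)).diff isOpen_interior
  have hcont := continuous_action (ι := ι) hI.continuous
  have hfar : ∀ᶠ k in 𝓝 l, ∀ w ∈ K, action ι I k w < action ι I k u := by
    refine hK.eventually_forall_of_forall_eventually fun w hw => ?_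
    have hlt : action ι I l w < action ι I l u := by
      refine gap.action_lt_of_mem_halfSpace hI hl hu.1 hw.1.1 ?_
      rintro rfl
      exact hw.2 (mem_interior_iff_mem_nhds.2 hU)
    exact hcont.continuousAt.eventually_lt (g := fun p : ℝ × X => action ι I p.1 u)
      (hcont.comp (continuous_fst.prodMk continuous_const)).continuousAt hlt
  filter_upwards [hfar, Ioo_mem_nhds hl.1 hl.2] with k hk hkab
  obtain ⟨w, hw, hwu⟩ := gap.exists_mem_nehariPankovSet hI hkab hu.1.1
  have hwle : I w ≤ ‖w‖ ^ 2 := le_norm_sq_of_action_nonneg (gap.neg_one_le_of_mem hkab)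
    (gap.action_pos hI hkab hw).le
  have hwU : w ∈ U := by
    by_contra hwU
    have hwK : w ∈ K :=
      ⟨⟨hwu, halfSpace_subset_sup_span hwu, hwle⟩, notMem_subset interior_subset hwU⟩
    exact (hk w hwK).not_ge
      (gap.action_le_of_mem_halfSpace hI hkab hw (mem_halfSpace_comm hwu hw.1))
  refine ⟨w, hwU, ?_⟩
  calc groundLevel ι V I I' k ≤ action ι I k w := gap.groundLevel_le hI hkab hw
    _ = action ι I l w - (k - l) * (‖ι w‖ ^ 2 / 2) := action_eq_add_shift
    _ ≤ action ι I l u - (k - l) * (‖ι w‖ ^ 2 / 2) :=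
      sub_le_sub_right (gap.action_le_of_mem_halfSpace hI hl hu.1 hwu) _
    _ = groundLevel ι V I I' l - (k - l) * (‖ι w‖ ^ 2 / 2) := by rw [hu.2]

theorem eventually_nhdsGT_groundLevel_add_lt {m : ℝ} (hl : l ∈ Ioo a b)
    (hu : u ∈ groundStates ι V I I' l) (hm : m < ‖ι u‖ ^ 2 / 2) :
    ∀ᶠ k in 𝓝[>] l, groundLevel ι V I I' k + k * m < groundLevel ι V I I' l + l * m := by
  have hU : ∀ᶠ w in 𝓝 u, m < ‖ι w‖ ^ 2 / 2 :=
    (Continuous.tendsto (by fun_prop) u).eventually_const_lt hm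
  filter_upwards [(gap.eventually_groundLevel_le hI hl hu hU).filter_mono nhdsWithin_le_nhds,
    self_mem_nhdsWithin] with k ⟨w, hw, hle⟩ hk
  linarith [mul_lt_mul_of_pos_left hw (sub_pos.2 hk)]

theorem eventually_nhdsLT_groundLevel_add_lt {m : ℝ} (hl : l ∈ Ioo a b)
    (hu : u ∈ groundStates ι V I I' l) (hm : ‖ι u‖ ^ 2 / 2 < m) :
    ∀ᶠ k in 𝓝[<] l, groundLevel ι V I I' k + k * m < groundLevel ι V I I' l + l * m := by
  have hU : ∀ᶠ w in 𝓝 u, ‖ι w‖ ^ 2 / 2 < m :=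
    (Continuous.tendsto (by fun_prop) u).eventually_lt_const hm
  filter_upwards [(gap.eventually_groundLevel_le hI hl hu hU).filter_mono nhdsWithin_le_nhds,
    self_mem_nhdsWithin] with k ⟨w, hw, hle⟩ hk
  linarith [mul_lt_mul_of_pos_left hw (sub_pos.2 hk)]

theorem mass_eq_of_isLocalMin {m : ℝ} (hl : l ∈ Ioo a b) (hu : u ∈ groundStates ι V I I' l)
    (hmin : IsLocalMin (fun k => groundLevel ι V I I' k + k * m) l) : ‖ι u‖ ^ 2 / 2 = m := by
  rcases lt_trichotomy (‖ι u‖ ^ 2 / 2) m with h | h | h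
  · obtain ⟨k, hlt, hge⟩ := ((gap.eventually_nhdsLT_groundLevel_add_lt hI hl hu h).and
      (hmin.filter_mono nhdsWithin_le_nhds)).exists
    exact absurd hge hlt.not_ge
  · exact h
  · obtain ⟨k, hlt, hge⟩ := ((gap.eventually_nhdsGT_groundLevel_add_lt hI hl hu h).and
      (hmin.filter_mono nhdsWithin_le_nhds)).exists
    exact absurd hge hlt.not_ge

theorem action_top_neg {z : X} (hz : ∀ w, ⟪z, w⟫_ℝ = (1 + b) * ⟪ι z, ι w⟫_ℝ)
    (hw : w ∈ V ⊔ Submodule.span ℝ {z}) (hw0 : w ≠ 0) : action ι I b w < 0 := by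
  obtain ⟨v, hv, t, rfl⟩ := exists_smul_add_of_mem_sup_span hw
  have hz_form (x : X) : shiftedForm ι b z x = 0 := sub_eq_zero.2 (hz x)
  rw [action, shiftedForm_smul_add_self, hz_form, hz_form]
  linarith [gap.shiftedForm_nonpos gap.lt hv, hI.pos hw0]

theorem eventually_groundLevel_lt {m : ℝ} (hm : 0 < m) :
    ∀ᶠ l in 𝓝[<] b, groundLevel ι V I I' l < (b - l) * m := by
  have := gap.finiteDimensional
  obtain ⟨z, hzV, hz0, hz⟩ := gap.exists_eigenvector
  let K : Set X :=
    {w | w ∈ V ⊔ Submodule.span ℝ {z} ∧ I w ≤ ‖w‖ ^ 2} ∩ {w | m ≤ ‖ι w‖ ^ 2 / 2}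
  have hK : IsCompact K :=
    (hI.isCompact_le_norm_sq _).inter_right (isClosed_le continuous_const (by fun_prop))
  have hneg : ∀ᶠ l in 𝓝 b, ∀ w ∈ K, action ι I l w < 0 := by
    refine hK.eventually_forall_of_forall_eventually fun w hw => ?_
    have hw0 : w ≠ 0 := by
      rintro rfl
      exact (hm.trans_le hw.2).ne' (by simp)
    exact (continuous_action hI.continuous).continuousAt.eventually_lt_const
      (gap.action_top_neg hI hz hw.1.1 hw0)
  filter_upwards [hneg.filter_mono nhdsWithin_le_nhds, Ioo_mem_nhdsLT gap.lt] with l hneg hl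
  obtain ⟨w, hw, hwz⟩ :=
    gap.exists_mem_nehariPankovSet hI hl (notMem_of_mem_orthogonal hzV hz0)
  have hpos := gap.action_pos hI hl hw
  have hwF := halfSpace_subset_sup_span hwz
  have hwm : ‖ι w‖ ^ 2 / 2 < m := by
    by_contra! hwm
    have hwI := le_norm_sq_of_action_nonneg (gap.neg_one_le_of_mem hl) hpos.le
    exact (hneg w ⟨⟨hwF, hwI⟩, hwm⟩).not_gt hpos
  have htop := gap.action_top_neg hI hz hwF (ne_zero_of_mem_nehariPankovSet hw)
  calc groundLevel ι V I I' l ≤ action ι I l w := gap.groundLevel_le hI hl hw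
    _ = action ι I b w - (l - b) * (‖ι w‖ ^ 2 / 2) := action_eq_add_shift
    _ < (b - l) * m := by linarith [mul_lt_mul_of_pos_left hwm (sub_pos.2 hl.2)]

theorem exists_isLocalMin_groundLevel_add [CompleteSpace X] {m : ℝ} (hm : 0 < m)
    (hl : l ∈ Ioo a b) (hu : u ∈ groundStates ι V I I' l) (hmu : m < ‖ι u‖ ^ 2 / 2) :
    ∃ k ∈ Ioo a b, IsLocalMin (fun k => groundLevel ι V I I' k + k * m) k := by
  set f : ℝ → ℝ := fun k => groundLevel ι V I I' k + k * m
  obtain ⟨p, hfp, hp⟩ := ((gap.eventually_groundLevel_lt hI hm).and (Ioo_mem_nhdsLT hl.2)).exists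
  have hpb : f p < b * m := by linarith
  obtain ⟨q, hfq, hq⟩ : ∃ q, f p < q * m ∧ q ∈ Ioo p b :=
    (((Continuous.tendsto (by fun_prop) b).mono_left nhdsWithin_le_nhds).eventually_const_lt hpb
      |>.and (Ioo_mem_nhdsLT hp.2)).exists
  have hfpq : f p < f q :=
    hfq.trans (lt_add_of_pos_left _ (gap.groundLevel_pos hI ⟨hl.1.trans (hp.1.trans hq.1), hq.2⟩))
  have hlsc : LowerSemicontinuousOn f (Icc l q) :=
    ((gap.lowerSemicontinuousOn_groundLevel hI).mono (Icc_subset_Ioo hl.1 hq.2)).add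
      (Continuous.lowerSemicontinuous (by fun_prop) |>.lowerSemicontinuousOn _)
  have hlq : l < q := hp.1.trans hq.1
  obtain ⟨k, hk, hmin⟩ := hlsc.exists_isMinOn (nonempty_Icc.2 hlq.le) isCompact_Icc
  obtain ⟨r, hfr, hr⟩ := ((gap.eventually_nhdsGT_groundLevel_add_lt hI hl hu hmu).and
    (Ioo_mem_nhdsGT hlq)).exists
  have hkl : k ≠ l := by
    rintro rfl
    exact (hmin (Ioo_subset_Icc_self hr)).not_gt hfr
  have hkq : k ≠ q := by
    rintro rfl
    exact (hmin ⟨hp.1.le, hq.1.le⟩).not_gt hfpq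
  have hk_mem : k ∈ Ioo l q := ⟨hk.1.lt_of_ne' hkl, hk.2.lt_of_ne hkq⟩
  exact ⟨k, ⟨hl.1.trans hk_mem.1, hk_mem.2.trans hq.2⟩,
    hmin.isLocalMin (Icc_mem_nhds hk_mem.1 hk_mem.2)⟩

theorem Ioo_subset_massSet [CompleteSpace X] {m : ℝ} (hm : m ∈ massSet ι V a b I I') :
    Ioo 0 m ⊆ massSet ι V a b I I' := by
  obtain ⟨l, hl, u, hu, rfl⟩ := hm
  intro m hm
  obtain ⟨k, hk, hmin⟩ := gap.exists_isLocalMin_groundLevel_add hI hm.1 hl hu hm.2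
  obtain ⟨w, hw⟩ := gap.exists_mem_groundStates hI hk
  exact ⟨k, hk, w, hw, (gap.mass_eq_of_isLocalMin hI hk hw hmin).symm⟩

theorem massSet_nonempty [CompleteSpace X] : (massSet ι V a b I I').Nonempty := by
  obtain ⟨l, hl⟩ := exists_between gap.lt
  obtain ⟨u, hu⟩ := gap.exists_mem_groundStates hI hl
  exact ⟨_, l, hl, u, hu, rfl⟩

theorem massSet_eq_Ioi_or [CompleteSpace X] : massSet ι V a b I I' = Ioi 0 ∨
    ∃ g, 0 < g ∧ Ioo 0 g ⊆ massSet ι V a b I I' ∧ massSet ι V a b I I' ⊆ Ioc 0 g :=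
  eq_Ioi_or_Ioo_subset_subset_Ioc (gap.massSet_nonempty hI) gap.massSet_subset_Ioi
    fun _ => gap.Ioo_subset_massSet hI

end GroundStates

end SpectralGap

end SpectralGap

section OrthogonalExpansion

variable {𝕜 X κ : Type*} [RCLike 𝕜] [NormedAddCommGroup X] [InnerProductSpace 𝕜 X]
  [CompleteSpace X]

theorem hasSum_inner_mul_inner_div_norm_sq {v : κ → X}
    (hv : Pairwise fun i j => inner 𝕜 (v i) (v j) = 0) (hv0 : ∀ i, v i ≠ 0)
    (hdense : (Submodule.span 𝕜 (range v)).topologicalClosure = ⊤) (x y : X) :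
    HasSum (fun i => inner 𝕜 x (v i) * inner 𝕜 (v i) y / (‖v i‖ : 𝕜) ^ 2) (inner 𝕜 x y) := by
  let w : κ → X := fun i => (‖v i‖ : 𝕜)⁻¹ • v i
  have hnorm (i : κ) : (‖v i‖ : 𝕜) ≠ 0 := RCLike.ofReal_ne_zero.2 (norm_ne_zero_iff.2 (hv0 i))
  have hw : Orthonormal 𝕜 w :=
    ⟨fun i => norm_smul_inv_norm (hv0 i), fun i j hij => by
      simp only [w, inner_smul_left, inner_smul_right, hv hij, mul_zero]⟩
  have hspan : Submodule.span 𝕜 (range v) ≤ Submodule.span 𝕜 (range w) := by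
    rw [Submodule.span_le, range_subset_iff]
    intro i
    rw [← smul_inv_smul₀ (hnorm i) (v i)]
    exact Submodule.smul_mem _ _ (Submodule.subset_span (mem_range_self i))
  have hdense_w : ⊤ ≤ (Submodule.span 𝕜 (range w)).topologicalClosure :=
    hdense ▸ Submodule.topologicalClosure_mono hspan
  let basis := HilbertBasis.mk hw hdense_w
  have hterm (i : κ) : inner 𝕜 x (v i) * inner 𝕜 (v i) y / (‖v i‖ : 𝕜) ^ 2 =
      inner 𝕜 x (basis i) * inner 𝕜 (basis i) y := by
    simp only [basis, w, HilbertBasis.coe_mk, inner_smul_left, inner_smul_right, map_inv₀,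
      RCLike.conj_ofReal]
    ring
  simpa only [hterm] using basis.hasSum_inner_mul_inner x y

end OrthogonalExpansion

section Eigenbasis

variable {X : Type*} [NormedAddCommGroup X] [InnerProductSpace ℝ X]
  {lam : ℕ → ℝ} {ζ : ℕ → X} {n : ℕ}

theorem coefH_add (u v : X) : coefH lam ζ (u + v) = coefH lam ζ u + coefH lam ζ v := by
  ext k
  simp only [coefH, inner_add_left, add_div, Pi.add_apply]

theorem coefH_smul (t : ℝ) (u : X) : coefH lam ζ (t • u) = t • coefH lam ζ u := by
  ext k
  simp only [coefH, real_inner_smul_left, mul_div_assoc, Pi.smul_apply, smul_eq_mul]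

theorem coefH_eq_zero_of_mem_orthogonal {w : X} (hw : w ∈ (Esub ζ n)ᗮ) {k : ℕ} (hk : k ≤ n) :
    coefH lam ζ w k = 0 := by
  have hζ : ζ k ∈ Esub ζ n := Submodule.subset_span (mem_image_of_mem ζ hk)
  rw [coefH, Submodule.inner_left_of_mem_orthogonal hζ hw, zero_div]

/-- The `ζ k` are eigenvectors, for the eigenvalues `lam k ≥ 0` of `A`, that form a Hilbert basis
of `H` (not of the form domain `X`, where `‖ζ k‖² = 1 + lam k`). -/
structure IsEigenbasis (lam : ℕ → ℝ) (ζ : ℕ → X) : Prop where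
  nonneg : ∀ k, 0 ≤ lam k
  inner_eq : ∀ j k, ⟪ζ j, ζ k⟫_ℝ = if j = k then 1 + lam k else 0
  dense : (Submodule.span ℝ (range ζ)).topologicalClosure = ⊤

namespace IsEigenbasis

variable (h : IsEigenbasis lam ζ)
include h

theorem one_add_pos (k : ℕ) : 0 < 1 + lam k := by linarith [h.nonneg k]

theorem norm_sq_eq (k : ℕ) : ‖ζ k‖ ^ 2 = 1 + lam k := by
  rw [← real_inner_self_eq_norm_sq, h.inner_eq, if_pos rfl]

theorem ne_zero (k : ℕ) : ζ k ≠ 0 :=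
  norm_ne_zero_iff.1 fun h0 => (h.one_add_pos k).ne (by rw [← h.norm_sq_eq, h0]; simp)

theorem coefH_eigenvector_of_ne {j k : ℕ} (hjk : j ≠ k) : coefH lam ζ (ζ j) k = 0 := by
  rw [coefH, h.inner_eq, if_neg hjk, zero_div]

theorem eigenvector_mem_orthogonal {k : ℕ} (hk : n < k) : ζ k ∈ (Esub ζ n)ᗮ := by
  have hortho : Esub ζ n ⟂ Submodule.span ℝ {ζ k} := by
    rw [Esub, Submodule.isOrtho_span]
    rintro _ ⟨j, hj, rfl⟩ _ rfl
    rw [h.inner_eq, if_neg (hj.trans_lt hk).ne]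
  exact hortho.symm (Submodule.mem_span_singleton_self _)

theorem coefH_eq_zero_of_mem {v : X} (hv : v ∈ Esub ζ n) {k : ℕ} (hk : n < k) :
    coefH lam ζ v k = 0 := by
  rw [coefH, Submodule.inner_right_of_mem_orthogonal hv (h.eigenvector_mem_orthogonal hk),
    zero_div]

variable [CompleteSpace X]

theorem hasSum_inner (u v : X) :
    HasSum (fun k => (1 + lam k) * (coefH lam ζ u k * coefH lam ζ v k)) ⟪u, v⟫_ℝ := by
  have hpair : Pairwise fun j k => ⟪ζ j, ζ k⟫_ℝ = 0 := fun j k hjk => by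
    simp only [h.inner_eq, if_neg hjk]
  have hterm (k : ℕ) : (1 + lam k) * (coefH lam ζ u k * coefH lam ζ v k) =
      ⟪u, ζ k⟫_ℝ * ⟪ζ k, v⟫_ℝ / ‖ζ k‖ ^ 2 := by
    have hk := (h.one_add_pos k).ne'
    rw [h.norm_sq_eq, coefH, coefH, real_inner_comm (ζ k) v]
    field_simp
  simp only [hterm]
  exact hasSum_inner_mul_inner_div_norm_sq hpair h.ne_zero h.dense u v

theorem summable_coefH_sq (u : X) : Summable fun k => coefH lam ζ u k ^ 2 :=
  (h.hasSum_inner u u).summable.of_nonneg_of_le (fun _ => sq_nonneg _) fun k => by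
    nlinarith [h.nonneg k, sq_nonneg (coefH lam ζ u k)]

theorem memℓp_coefH (u : X) : Memℓp (coefH lam ζ u) 2 :=
  memℓp_gen_iff (by norm_num) |>.2 <| by simpa using h.summable_coefH_sq u

theorem norm_coefH_le (u : X) :
    ‖(⟨coefH lam ζ u, h.memℓp_coefH u⟩ : lp (fun _ : ℕ => ℝ) 2)‖ ≤ ‖u‖ := by
  set x : lp (fun _ : ℕ => ℝ) 2 := ⟨coefH lam ζ u, h.memℓp_coefH u⟩
  have hx : HasSum (fun k => coefH lam ζ u k * coefH lam ζ u k) ⟪x, x⟫_ℝ :=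
    lp.hasSum_inner (𝕜 := ℝ) x x
  have hle : ⟪x, x⟫_ℝ ≤ ⟪u, u⟫_ℝ := hasSum_le
    (fun k => le_mul_of_one_le_left (mul_self_nonneg _) (le_add_of_nonneg_right (h.nonneg k)))
    hx (h.hasSum_inner u u)
  rw [real_inner_self_eq_norm_sq, real_inner_self_eq_norm_sq] at hle
  exact (sq_le_sq₀ (norm_nonneg x) (norm_nonneg u)).1 hle

/-- The embedding of the form domain in `H`, where `H` is identified with `ℓ²` through its
coordinates in the eigenbasis. -/
noncomputable def toL2 : X →L[ℝ] lp (fun _ : ℕ => ℝ) 2 :=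
  LinearMap.mkContinuous
    { toFun := fun u => ⟨coefH lam ζ u, h.memℓp_coefH u⟩
      map_add' := fun u v => Subtype.ext (coefH_add u v)
      map_smul' := fun t u => Subtype.ext (coefH_smul t u) }
    1 fun u => (h.norm_coefH_le u).trans_eq (one_mul _).symm

theorem hasSum_inner_toL2 (u v : X) :
    HasSum (fun k => coefH lam ζ u k * coefH lam ζ v k) ⟪h.toL2 u, h.toL2 v⟫_ℝ := by
  rw [real_inner_comm]
  exact lp.hasSum_inner (𝕜 := ℝ) (h.toL2 v) (h.toL2 u)

theorem normHsq_eq (u : X) : normHsq lam ζ u = ‖h.toL2 u‖ ^ 2 := by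
  rw [← real_inner_self_eq_norm_sq, ← (h.hasSum_inner_toL2 u u).tsum_eq, normHsq]
  simp only [sq]

theorem qForm_eq (l : ℝ) (u v : X) : qForm lam ζ l u v = shiftedForm h.toL2 l u v := by
  rw [shiftedForm, ← ((h.hasSum_inner u v).sub
    ((h.hasSum_inner_toL2 u v).mul_left (1 + l))).tsum_eq, qForm]
  exact tsum_congr fun k => by ring

theorem Jfun_eq (I : X → ℝ) (l : ℝ) (u : X) : Jfun lam ζ I l u = action h.toL2 I l u := by
  rw [Jfun, action, h.qForm_eq]

theorem NehariPankov_eq (I' : X → X →L[ℝ] ℝ) (l : ℝ) :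
    NehariPankov lam ζ I' n l = nehariPankovSet h.toL2 (Esub ζ n) I' l := by
  simp only [NehariPankov, nehariPankovSet, Fsub, Jderiv, sub_eq_zero, h.qForm_eq]

theorem Qset_eq (I : X → ℝ) (I' : X → X →L[ℝ] ℝ) (l : ℝ) :
    Qset lam ζ I I' n l = groundStates h.toL2 (Esub ζ n) I I' l := by
  simp only [Qset, groundStates, clevel, groundLevel, h.NehariPankov_eq, h.Jfun_eq]

theorem massSet_eq (a b : ℝ) (I : X → ℝ) (I' : X → X →L[ℝ] ℝ) :
    {m : ℝ | ∃ l ∈ Ioo a b, ∃ u ∈ Qset lam ζ I I' n l, m = normHsq lam ζ u / 2} =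
      massSet h.toL2 (Esub ζ n) a b I I' := by
  simp only [massSet, h.Qset_eq, h.normHsq_eq]

theorem toL2_injective : Function.Injective h.toL2 := by
  rw [injective_iff_map_eq_zero]
  intro u hu
  have hcoef : coefH lam ζ u = 0 := congrArg Subtype.val hu
  have hsum := h.hasSum_inner u u
  simp only [hcoef, Pi.zero_apply, mul_zero] at hsum
  exact inner_self_eq_zero.1 (hsum.unique hasSum_zero)

theorem norm_sq_le_mul_norm_toL2_sq {v : X} {a : ℝ}
    (hv : ∀ k, coefH lam ζ v k = 0 ∨ lam k ≤ a) : ‖v‖ ^ 2 ≤ (1 + a) * ‖h.toL2 v‖ ^ 2 := by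
  rw [← real_inner_self_eq_norm_sq, ← real_inner_self_eq_norm_sq]
  refine hasSum_le (fun k => ?_) (h.hasSum_inner v v) ((h.hasSum_inner_toL2 v v).mul_left (1 + a))
  rcases hv k with hk | hk
  · simp [hk]
  · gcongr
    exact mul_self_nonneg _

theorem mul_norm_toL2_sq_le_norm_sq {v : X} {b : ℝ}
    (hv : ∀ k, coefH lam ζ v k = 0 ∨ b ≤ lam k) : (1 + b) * ‖h.toL2 v‖ ^ 2 ≤ ‖v‖ ^ 2 := by
  rw [← real_inner_self_eq_norm_sq, ← real_inner_self_eq_norm_sq]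
  refine hasSum_le (fun k => ?_) ((h.hasSum_inner_toL2 v v).mul_left (1 + b)) (h.hasSum_inner v v)
  rcases hv k with hk | hk
  · simp [hk]
  · gcongr
    exact mul_self_nonneg _

theorem inner_eigenvector (j : ℕ) (w : X) :
    ⟪ζ j, w⟫_ℝ = (1 + lam j) * ⟪h.toL2 (ζ j), h.toL2 w⟫_ℝ := by
  have hterm (k : ℕ) : (1 + lam k) * (coefH lam ζ (ζ j) k * coefH lam ζ w k) =
      (1 + lam j) * (coefH lam ζ (ζ j) k * coefH lam ζ w k) := by
    rcases eq_or_ne j k with rfl | hjk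
    · rfl
    · simp only [h.coefH_eigenvector_of_ne hjk, zero_mul, mul_zero]
  have hsum := h.hasSum_inner (ζ j) w
  simp only [hterm] at hsum
  exact hsum.unique ((h.hasSum_inner_toL2 (ζ j) w).mul_left _)

theorem spectralGap (hgap : lam n < lam (n + 1)) (hbelow : ∀ k ≤ n, lam k ≤ lam n)
    (habove : ∀ k, n < k → lam (n + 1) ≤ lam k) :
    SpectralGap h.toL2 (Esub ζ n) (lam n) (lam (n + 1)) where
  injective := h.toL2_injective
  finiteDimensional := FiniteDimensional.span_of_finite ℝ ((finite_le_nat n).image ζ)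
  neg_one_le := by linarith [h.nonneg n]
  lt := hgap
  norm_sq_le v hv := h.norm_sq_le_mul_norm_toL2_sq fun k =>
    (lt_or_ge n k).imp (h.coefH_eq_zero_of_mem hv) (hbelow k)
  le_norm_sq w hw := h.mul_norm_toL2_sq_le_norm_sq fun k =>
    (le_or_gt k n).imp (coefH_eq_zero_of_mem_orthogonal hw) (habove k)
  exists_eigenvector :=
    ⟨ζ (n + 1), h.eigenvector_mem_orthogonal n.lt_succ_self, h.ne_zero _, h.inner_eigenvector _⟩

end IsEigenbasis

end Eigenbasis

theorem masses_form_connected_set_general {X : Type*} [NormedAddCommGroup X]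
    [InnerProductSpace ℝ X] [CompleteSpace X] {lam : ℕ → ℝ} {ζ : ℕ → X}
    (h : IsEigenbasis lam ζ) {I : X → ℝ} {I' : X → X →L[ℝ] ℝ} (hI : PankovNonlinearity I I')
    {n : ℕ} (hgap : lam n < lam (n + 1)) (hbelow : ∀ k ≤ n, lam k ≤ lam n)
    (habove : ∀ k, n < k → lam (n + 1) ≤ lam k) :
    {m : ℝ | ∃ l ∈ Ioo (lam n) (lam (n + 1)),
        ∃ u ∈ Qset lam ζ I I' n l, m = normHsq lam ζ u / 2} = Ioi 0 ∨
    ∃ g : ℝ, 0 < g ∧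
      Ioo 0 g ⊆ {m : ℝ | ∃ l ∈ Ioo (lam n) (lam (n + 1)),
        ∃ u ∈ Qset lam ζ I I' n l, m = normHsq lam ζ u / 2} ∧
      {m : ℝ | ∃ l ∈ Ioo (lam n) (lam (n + 1)),
        ∃ u ∈ Qset lam ζ I I' n l, m = normHsq lam ζ u / 2} ⊆ Ioc 0 g := by
  rw [h.massSet_eq]
  exact (h.spectralGap hgap hbelow habove).massSet_eq_Ioi_or hI

/-- The set `M_n` of half-squared `H`-norms of ground states over the
spectral gap `(λ_n, λ_{n+1})` is either all of `(0,∞)` or satisfies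
`(0, g_n) ⊆ M_n ⊆ (0, g_n]` for some `g_n > 0`. -/
theorem masses_form_connected_set {E : Type*} [NormedAddCommGroup E]
    [InnerProductSpace ℝ E] [CompleteSpace E]
    (lam : ℕ → ℝ) (ζ : ℕ → E)
    (hlam_mono : Monotone lam) (hlam_nonneg : ∀ k, 0 ≤ lam k)
    (hlam_top : Tendsto lam atTop atTop)
    (hON : ∀ j k, ⟪ζ j, ζ k⟫_ℝ = if j = k then 1 + lam k else 0)
    (hdense : (Submodule.span ℝ (Set.range ζ)).topologicalClosure = ⊤)
    (I : E → ℝ) (I' : E → E →L[ℝ] ℝ)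
    (hIderiv : ∀ u, HasFDerivAt I (I' u) u) (hIderiv_cont : Continuous I')
    (hI1 : ∀ (u : ℕ → E) (a : E),
      (∀ φ : E →L[ℝ] ℝ, Tendsto (fun j => φ (u j)) atTop (𝓝 (φ a))) →
      Tendsto (fun j => I (u j)) atTop (𝓝 (I a)))
    (hI2 : I 0 = 0 ∧ ∀ u : E, u ≠ 0 → 0 < I u)
    (hI3mono : ∀ u : E, u ≠ 0 → MonotoneOn (fun t : ℝ => I (t • u) / t ^ 2) (Ioi 0))
    (hI3zero : ∀ u : E, u ≠ 0 → Tendsto (fun t : ℝ => I (t • u) / t ^ 2) (𝓝[>] 0) (𝓝 0))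
    (hI3top : ∀ u : E, u ≠ 0 → Tendsto (fun t : ℝ => I (t • u) / t ^ 2) atTop atTop)
    (hI4 : ∀ u : E, u ≠ 0 → ∀ v : E, ∀ s : ℝ, -1 ≤ s →
      I u - I ((1 + s) • u + v) + I' u ((s * (s / 2 + 1)) • u + (1 + s) • v) ≤ 0)
    (hI4strict : ∀ u : E, u ≠ 0 → ∀ s : ℝ, -1 ≤ s → s ≠ 0 →
      I u - I ((1 + s) • u) + I' u ((s * (s / 2 + 1)) • u) < 0)
    (n : ℕ)
    (hgap : lam n < lam (n + 1)) :
    {m : ℝ | ∃ lambda ∈ Ioo (lam n) (lam (n + 1)),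
        ∃ u ∈ Qset lam ζ I I' n lambda, m = normHsq lam ζ u / 2} = Ioi 0 ∨
    ∃ g : ℝ, 0 < g ∧
      Ioo 0 g ⊆ {m : ℝ | ∃ lambda ∈ Ioo (lam n) (lam (n + 1)),
        ∃ u ∈ Qset lam ζ I I' n lambda, m = normHsq lam ζ u / 2} ∧
      {m : ℝ | ∃ lambda ∈ Ioo (lam n) (lam (n + 1)),
        ∃ u ∈ Qset lam ζ I I' n lambda, m = normHsq lam ζ u / 2} ⊆ Ioc 0 g := by
  have hζ : IsEigenbasis lam ζ := ⟨hlam_nonneg, hON, hdense⟩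
  have hI : PankovNonlinearity I I' := ⟨fun u => (hIderiv u).hasLineDerivAt, hI1 _ _, hI2.1,
    hI3zero _, hI3top _, fun hu v _ => hI4 _ hu v _, fun hu _ => hI4strict _ hu _⟩
  exact masses_form_connected_set_general hζ hI hgap (fun _ hk => hlam_mono hk)
    fun _ hk => hlam_mono hk
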